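/- For every factor α of ω with |α| ≥ 2, there exist an integer n ≥ 0, an integer k with 2 ≤ k ≤ 4, letters i_1, …, i_k ∈ {0,1}, a word γ_0 with 0 ≤ |γ_0| < 2^n that is a suffix of 0^{(n)} or of 1^{(n)}, and a word γ_1 with 0 ≤ |γ_1| < 2^n that is a prefix of 0^{(n)} or of 1^{(n)}, such that α = γ_0 i_1^{(n)} i_2^{(n)} ⋯ i_k^{(n)} γ_1 (where γ_0 and γ_1 may be empty). -/

import Mathlib

/-- One-sided Thue–Morse sequence: parity of the binary digit sum. -/
def tm (n : ℕ) : ℕ := (Nat.digits 2 n).sum % 2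

/-- Two-sided Thue–Morse sequence `ω : ℤ → {0,1}`. -/
def tmZ (n : ℤ) : ℕ := if 0 ≤ n then tm n.toNat else tm (-n - 1).toNat

/-- The block `ω_[m, m+k-1]` of the two-sided Thue–Morse sequence. -/
def tmBlock (m : ℤ) (k : ℕ) : List ℕ := (List.range k).map fun j => tmZ (m + j)

/-- A (nonempty) word is a factor of the two-sided Thue–Morse sequence. -/
def IsFactor (α : List ℕ) : Prop := α ≠ [] ∧ ∃ m : ℤ, α = tmBlock m α.length

/-- The words `i⁽ⁿ⁾`: `blk i 0 = [i]`, `blk i (n+1) = blk i n ++ blk (1-i) n`. -/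
def blk : ℕ → ℕ → List ℕ
  | i, 0 => [i]
  | i, n + 1 => blk i n ++ blk (1 - i) n

theorem tm_lt (n : ℕ) : tm n = 0 ∨ tm n = 1 := by
  unfold tm; omega

theorem tm_even (n : ℕ) : tm (2 * n) = tm n := by
  unfold tm
  rcases Nat.eq_zero_or_pos n with rfl | h
  · simp
  · have := Nat.digits_add_two_add_one 0 (2 * n - 1)
    have e : 2 * n - 1 + 1 = 2 * n := by omega
    rw [e] at this
    simp only [Nat.zero_add] at this
    rw [this]
    simp

theorem tm_odd (n : ℕ) : tm (2 * n + 1) = 1 - tm n := by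
  have := Nat.digits_add_two_add_one 0 (2 * n)
  simp only [Nat.zero_add] at this
  unfold tm
  rw [this, List.sum_cons]
  have e : (2 * n + 1) / 2 = n := by omega
  rw [e]
  omega

theorem tmZ_lt (n : ℤ) : tmZ n = 0 ∨ tmZ n = 1 := by
  unfold tmZ; split <;> exact tm_lt _

theorem tmZ_pe (q : ℤ) (h : 0 ≤ q) : tmZ (2 * q) = tmZ q := by
  unfold tmZ
  rw [if_pos h, if_pos (by omega), ← tm_even q.toNat]
  congr 1; omega

theorem tmZ_po (q : ℤ) (h : 0 ≤ q) : tmZ (2 * q + 1) = 1 - tmZ q := by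
  unfold tmZ
  rw [if_pos h, if_pos (by omega), ← tm_odd]
  congr 1; omega

theorem tmZ_ne (q : ℤ) (h : ¬ 0 ≤ q) : tmZ (2 * q) = 1 - tmZ q := by
  unfold tmZ
  rw [if_neg h, if_neg (by omega), ← tm_odd]
  congr 1; omega

theorem tmZ_no (q : ℤ) (h : ¬ 0 ≤ q) : tmZ (2 * q + 1) = tmZ q := by
  unfold tmZ
  rw [if_neg h, if_neg (by omega), ← tm_even (-q - 1).toNat]
  congr 1; omega

def ltr (n : ℕ) (q : ℤ) : ℕ :=
  if 0 ≤ q then tmZ q else if n % 2 = 0 then tmZ q else 1 - tmZ q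

theorem ltr_lt (n : ℕ) (q : ℤ) : ltr n q = 0 ∨ ltr n q = 1 := by
  have := tmZ_lt q
  unfold ltr; split_ifs <;> omega

theorem ltr_e (n : ℕ) (q : ℤ) : ltr n (2 * q) = ltr (n + 1) q := by
  have := tmZ_lt q
  unfold ltr
  by_cases h : 0 ≤ q
  · rw [if_pos h, if_pos (by omega), tmZ_pe q h]
  · rw [if_neg h, if_neg (by omega), tmZ_ne q h]
    split_ifs <;> omega

theorem ltr_o (n : ℕ) (q : ℤ) : ltr n (2 * q + 1) = 1 - ltr (n + 1) q := by
  have := tmZ_lt q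
  unfold ltr
  by_cases h : 0 ≤ q
  · rw [if_pos h, if_pos (by omega), tmZ_po q h]
  · rw [if_neg h, if_neg (by omega), tmZ_no q h]
    split_ifs <;> omega

theorem tmBlock_eq (m : ℤ) (k : ℕ) :
    tmBlock m k = (List.range k).map fun j : ℕ => tmZ (m + (j : ℤ)) := by
  unfold tmBlock
  simp only [List.bind_eq_flatMap, List.pure_def, List.map_flatMap, List.map_cons, List.map_nil]
  rw [← List.map_eq_flatMap]

theorem tmBlock_add (m : ℤ) (a b : ℕ) :
    tmBlock m (a + b) = tmBlock m a ++ tmBlock (m + a) b := by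
  simp only [tmBlock_eq]
  rw [List.range_add, List.map_append, List.map_map]
  congr 1
  apply List.map_congr_left
  intro j _
  simp [add_assoc]

theorem tmBlock_len (m : ℤ) (a : ℕ) : (tmBlock m a).length = a := by
  simp [tmBlock]

theorem tmBlock_blk (n : ℕ) : ∀ q : ℤ, tmBlock (2 ^ n * q) (2 ^ n) = blk (ltr n q) n := by
  induction n with
  | zero => intro q; simp [tmBlock, blk, ltr]
  | succ n ih =>
    intro q
    have e : (2 : ℕ) ^ (n + 1) = 2 ^ n + 2 ^ n := by ring
    have e1 : (2 : ℤ) ^ (n + 1) * q = 2 ^ n * (2 * q) := by ring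
    have e2 : (2 : ℤ) ^ n * (2 * q) + ((2 ^ n : ℕ) : ℤ) = 2 ^ n * (2 * q + 1) := by
      push_cast; ring
    rw [e, e1, tmBlock_add, e2, ih, ih, ltr_e, ltr_o, blk]

theorem tmBlock_many (n : ℕ) (a : ℤ) (k : ℕ) : tmBlock (2 ^ n * a) (2 ^ n * k) =
    (((List.range k).map fun j : ℕ => ltr n (a + j)).map fun i => blk i n).flatten := by
  induction k with
  | zero => simp [tmBlock]
  | succ k ih =>
    have e2 : (2 : ℤ) ^ n * a + ((2 ^ n * k : ℕ) : ℤ) = 2 ^ n * (a + k) := by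
      push_cast; ring
    rw [Nat.mul_succ, tmBlock_add, ih, e2, tmBlock_blk, List.range_succ]
    simp

theorem blk_or {P : List ℕ → Prop} {n : ℕ} {q : ℤ} (h : P (tmBlock (2 ^ n * q) (2 ^ n))) :
    P (blk 0 n) ∨ P (blk 1 n) := by
  rw [tmBlock_blk] at h
  rcases ltr_lt n q with e | e <;> rw [e] at h
  · exact Or.inl h
  · exact Or.inr h

theorem exists_level (m : ℤ) (L : ℕ) (hL : 2 ≤ L) : ∃ (n k : ℕ) (a : ℤ), 2 ≤ k ∧ k ≤ 4 ∧
    m ≤ 2 ^ n * a ∧ 2 ^ n * a < m + 2 ^ n ∧ 2 ^ n * (a + k) ≤ m + L ∧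
    m + L < 2 ^ n * (a + k) + 2 ^ n := by
  classical
  let P : ℕ → Prop := fun n => ∃ a : ℤ, m ≤ 2 ^ n * a ∧ 2 ^ n * (a + 2) ≤ m + L
  have h0 : P 0 := ⟨m, by simp, by simp; omega⟩
  have hb : ¬ P L := by
    rintro ⟨a, h1, h2⟩
    have : (L : ℤ) < 2 ^ L := by exact_mod_cast Nat.lt_two_pow_self
    linarith
  obtain ⟨n, hn, hn'⟩ : ∃ n, P n ∧ ¬ P (n + 1) := by
    by_contra! hc
    exact hb (Nat.rec h0 (fun n h => hc n h) L)
  obtain ⟨a0, h1, h2⟩ := hn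
  have hp : (0 : ℤ) < 2 ^ n := by positivity
  -- ceiling and floor
  set p : ℤ := 2 ^ n with hpd
  have c1 := Int.mul_ediv_add_emod (m + p - 1) p
  have c2 := Int.emod_nonneg (m + p - 1) hp.ne'
  have c3 := Int.emod_lt_of_pos (m + p - 1) hp
  have d1 := Int.mul_ediv_add_emod (m + L) p
  have d2 := Int.emod_nonneg (m + L) hp.ne'
  have d3 := Int.emod_lt_of_pos (m + L) hp
  set a := (m + p - 1) / p
  set b := (m + L) / p
  have ha : a ≤ a0 := by
    by_contra! h
    have : p * (a0 + 1) ≤ p * a :=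
      mul_le_mul_of_nonneg_left (by omega) hp.le
    linarith
  have hbb : a0 + 2 ≤ b := by
    by_contra! h
    have : p * (b + 1) ≤ p * (a0 + 2) :=
      mul_le_mul_of_nonneg_left (by omega) hp.le
    linarith
  obtain ⟨k, hk⟩ : ∃ k : ℕ, b = a + k := ⟨(b - a).toNat, by
    have : a ≤ b := by linarith
    rw [Int.toNat_of_nonneg (by linarith)]; ring⟩
  have hma : m ≤ p * a := by linarith
  refine ⟨n, k, a, by omega, ?_, hma, by linarith, by rw [← hk]; linarith,
    by rw [← hk]; linarith⟩
  by_contra! h5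
  apply hn'
  refine ⟨(a + 1) / 2, ?_, ?_⟩
  · have : p * a ≤ p * (2 * ((a + 1) / 2)) :=
      mul_le_mul_of_nonneg_left (by omega) hp.le
    rw [pow_succ]; linarith
  · have : p * (2 * ((a + 1) / 2 + 2)) ≤ p * b :=
      mul_le_mul_of_nonneg_left (by omega) hp.le
    rw [pow_succ]; linarith

theorem factor_blk_decomposition (α : List ℕ) (hα : IsFactor α) (hlen : 2 ≤ α.length) :
    ∃ (n : ℕ) (is : List ℕ) (γ₀ γ₁ : List ℕ),
      2 ≤ is.length ∧ is.length ≤ 4 ∧ (∀ i ∈ is, i = 0 ∨ i = 1) ∧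
      γ₀.length < 2 ^ n ∧ (γ₀ <:+ blk 0 n ∨ γ₀ <:+ blk 1 n) ∧
      γ₁.length < 2 ^ n ∧ (γ₁ <+: blk 0 n ∨ γ₁ <+: blk 1 n) ∧
      α = γ₀ ++ (is.map fun i => blk i n).flatten ++ γ₁ := by
  obtain ⟨-, m, hm⟩ := hα
  generalize α.length = L at hm hlen
  subst hm
  obtain ⟨n, k, a, hk2, hk4, h1, h2, h3, h4⟩ := exists_level m L hlen
  obtain ⟨u, hu⟩ : ∃ u : ℕ, (2 : ℤ) ^ n * a = m + u := ⟨(2 ^ n * a - m).toNat, by omega⟩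
  obtain ⟨v, hv⟩ : ∃ v : ℕ, m + L = (2 : ℤ) ^ n * (a + k) + v :=
    ⟨(m + L - 2 ^ n * (a + k)).toNat, by omega⟩
  have hun : u < 2 ^ n := by zify; linarith
  have hvn : v < 2 ^ n := by zify; linarith
  have hL : L = u + 2 ^ n * k + v := by zify; linarith
  refine ⟨n, (List.range k).map fun j : ℕ => ltr n (a + j), tmBlock m u,
    tmBlock (2 ^ n * (a + k)) v, by simpa, by simpa, ?_, by rwa [tmBlock_len], ?_,
    by rwa [tmBlock_len], ?_, ?_⟩
  · intro i hi
    obtain ⟨j, -, rfl⟩ := List.mem_map.1 hi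
    exact ltr_lt _ _
  · apply blk_or (P := fun l => tmBlock m u <:+ l) (q := a - 1)
    obtain ⟨w, hw⟩ := Nat.exists_eq_add_of_lt hun
    have e : (2 : ℕ) ^ n = (w + 1) + u := by omega
    have e' : (2 : ℤ) ^ n = (w + 1 : ℕ) + u := by exact_mod_cast e
    have e3 : (2 : ℤ) ^ n * (a - 1) + ((w + 1 : ℕ) : ℤ) = m := by linarith
    refine ⟨tmBlock (2 ^ n * (a - 1)) (w + 1), ?_⟩
    rw [e, tmBlock_add _ (w + 1) u, e3]
  · apply blk_or (P := fun l => tmBlock (2 ^ n * (a + k)) v <+: l) (q := a + k)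
    obtain ⟨w, hw⟩ := Nat.exists_eq_add_of_lt hvn
    have e : (2 : ℕ) ^ n = v + (w + 1) := by omega
    rw [e, tmBlock_add]
    exact List.prefix_append _ _
  · rw [← tmBlock_many, hL, tmBlock_add, tmBlock_add, ← hu]
    congr 2
    push_cast; linarith
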